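/- arXiv:0912.3856 — 6 statements merged into one kernel-verified Lean document; each statement's English description precedes it below -/
import Mathlib

section
/- For every state X in the feasible domain Ω and all indices i, j ∈ {1,…,Q}, the partial derivative of the total system cost 𝒞 with respect to the variable x_j^i exists and equals the payoff F_j^i(X); that is, ∂𝒞/∂x_j^i (X) = 1/(C^i − Σ_{l=1}^Q x_l^i) + p_j^i + (Σ_{l=1}^Q x_l^i)/(C^i − Σ_{l=1}^Q x_l^i)². -/
open Finset Set

/-- The feasible domain Ω: all entries nonnegative and each column sum below capacity. -/
def feasible {Q : ℕ} (C : Fin Q → ℝ) : Set (Fin Q → Fin Q → ℝ) :=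
  {X | (∀ j i, 0 ≤ X j i) ∧ ∀ i, (∑ l, X l i) < C i}

/-- The total system cost 𝒞(X). -/
noncomputable def cost {Q : ℕ} (C : Fin Q → ℝ) (p : Fin Q → Fin Q → ℝ)
    (X : Fin Q → Fin Q → ℝ) : ℝ :=
  ∑ i, ((∑ r, X r i) / (C i - ∑ l, X l i) + ∑ r, p r i * X r i)

/-- The payoff F_j^i(X) of option i to mTracker j. -/
noncomputable def payoff {Q : ℕ} (C : Fin Q → ℝ) (p : Fin Q → Fin Q → ℝ)
    (X : Fin Q → Fin Q → ℝ) (j i : Fin Q) : ℝ :=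
  1 / (C i - ∑ l, X l i) + p j i + (∑ l, X l i) / (C i - ∑ l, X l i) ^ 2

/-- Replacing the `(j, i)` entry of `X` by a variable gives matrix entries whose derivatives
are the entries of the elementary matrix at `(j, i)`. -/
theorem hasDerivAt_update_update {Q : ℕ} (X : Fin Q → Fin Q → ℝ) (i j r k : Fin Q) (t : ℝ) :
    HasDerivAt (fun t : ℝ => Function.update X j (Function.update (X j) i t) r k)
      (if r = j then if k = i then 1 else 0 else 0) t := by
  rcases eq_or_ne r j with rfl | hr
  · rcases eq_or_ne k i with rfl | hk
    · simpa using hasDerivAt_id' t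
    · simpa [hk] using hasDerivAt_const t (X r k)
  · simpa [hr] using hasDerivAt_const t (X r k)

/-- For every state X in the feasible domain Ω and all indices i, j, the partial derivative
of the total system cost 𝒞 with respect to x_j^i exists and equals the payoff F_j^i(X). -/
theorem partial_deriv_cost_eq_payoff (Q : ℕ) (hQ : 1 ≤ Q)
    (C : Fin Q → ℝ) (hC : ∀ i, 0 < C i)
    (p : Fin Q → Fin Q → ℝ) (hp : ∀ j i, 0 ≤ p j i)
    (X : Fin Q → Fin Q → ℝ) (hX : X ∈ feasible C) (i j : Fin Q) :
    HasDerivAt (fun t : ℝ => cost C p (Function.update X j (Function.update (X j) i t)))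
      (payoff C p X j i) (X j i) := by
  have hsum (k : Fin Q) : HasDerivAt
      (fun t : ℝ => ∑ r, Function.update X j (Function.update (X j) i t) r k)
      (if k = i then 1 else 0) (X j i) := by
    simpa using HasDerivAt.fun_sum (u := Finset.univ)
      fun r _ => hasDerivAt_update_update X i j r k (X j i)
  have hprice (k : Fin Q) : HasDerivAt
      (fun t : ℝ => ∑ r, p r k * Function.update X j (Function.update (X j) i t) r k)
      (if k = i then p j k else 0) (X j i) := by
    simpa using HasDerivAt.fun_sum (u := Finset.univ)
      fun r _ => (hasDerivAt_update_update X i j r k (X j i)).const_mul (p r k)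
  have hpos (k : Fin Q) : C k - ∑ l, X l k ≠ 0 := (sub_pos.2 (hX.2 k)).ne'
  have hterm (k : Fin Q) : HasDerivAt
      (fun t : ℝ => (∑ r, Function.update X j (Function.update (X j) i t) r k) /
          (C k - ∑ l, Function.update X j (Function.update (X j) i t) l k) +
        ∑ r, p r k * Function.update X j (Function.update (X j) i t) r k)
      (if k = i then payoff C p X j i else 0) (X j i) := by
    refine (((hsum k).fun_div ((hsum k).const_sub (C k)) ?_).fun_add (hprice k)).congr_deriv ?_
    · simpa using hpos k
    · rcases eq_or_ne k i with rfl | hk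
      · have := hpos k
        simp only [Function.update_eq_self, if_true, payoff]
        field_simp
        ring
      · simp [hk]
  simpa [cost] using HasDerivAt.fun_sum (u := Finset.univ) fun k _ => hterm k
end

section
/- Let X : [0, T) → Ω be a differentiable trajectory such that for all t, X(t) lies in the feasible domain Ω, every row sum x_j(t) = Σ_{i=1}^Q x_j^i(t) is strictly positive, and X satisfies the replicator dynamics d/dt x_j^i(t) = x_j^i(t) (F̄_j(X(t)) − F_j^i(X(t))) for all i, j. Then the total system cost t ↦ 𝒞(X(t)) is nonincreasing on [0, T). -/
open Finset Set

/-- The derivative of the cost along a differentiable curve is the payoff paired with the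
velocity of the curve. -/
theorem hasDerivAt_cost {Q : ℕ} {C : Fin Q → ℝ} {p : Fin Q → Fin Q → ℝ}
    {X : ℝ → Fin Q → Fin Q → ℝ} {V : Fin Q → Fin Q → ℝ} {t : ℝ}
    (hcap : ∀ i, ∑ l, X t l i ≠ C i)
    (hX : ∀ j i, HasDerivAt (fun s => X s j i) (V j i) t) :
    HasDerivAt (fun s => cost C p (X s)) (∑ j, ∑ i, payoff C p (X t) j i * V j i) t := by
  rw [Finset.sum_comm]
  unfold cost
  refine HasDerivAt.fun_sum fun i _ => ?_
  have hne : C i - ∑ l, X t l i ≠ 0 := sub_ne_zero.mpr (hcap i).symm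
  have hsum : HasDerivAt (fun s => ∑ l, X s l i) (∑ l, V l i) t :=
    HasDerivAt.fun_sum fun l _ => hX l i
  have hprice : HasDerivAt (fun s => ∑ r, p r i * X s r i) (∑ r, p r i * V r i) t :=
    HasDerivAt.fun_sum fun r _ => (hX r i).const_mul (p r i)
  refine ((hsum.div (hsum.const_sub (C i)) hne).add hprice).congr_deriv ?_
  simp only [payoff, add_mul, Finset.sum_add_distrib, ← Finset.mul_sum]
  field_simp
  ring

/-- The pairing of a payoff vector with its replicator velocity is nonpositive. -/
theorem sum_mul_replicator_nonpos {ι : Type*} [Fintype ι] {x : ι → ℝ} (f : ι → ℝ)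
    (hx : ∀ i, 0 ≤ x i) (hs : 0 < ∑ i, x i) :
    ∑ i, f i * (x i * ((1 / ∑ r, x r) * (∑ r, x r * f r) - f i)) ≤ 0 := by
  have hcs : (∑ i, x i * f i) ^ 2 ≤ (∑ i, x i) * ∑ i, x i * f i ^ 2 :=
    Finset.sum_sq_le_sum_mul_sum_of_sq_le_mul _ (fun i _ => hx i)
      (fun i _ => mul_nonneg (hx i) (sq_nonneg _)) (fun i _ => le_of_eq (by ring))
  have heq : ∑ i, f i * (x i * ((1 / ∑ r, x r) * (∑ r, x r * f r) - f i))
      = (∑ i, x i * f i) ^ 2 / (∑ i, x i) - ∑ i, x i * f i ^ 2 := by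
    calc _ = ∑ i, (x i * f i * ((1 / ∑ r, x r) * (∑ r, x r * f r)) - x i * f i ^ 2) :=
          Finset.sum_congr rfl fun i _ => by ring
      _ = _ := by rw [Finset.sum_sub_distrib, ← Finset.sum_mul]; ring
  rw [heq, sub_nonpos, div_le_iff₀ hs, mul_comm]
  exact hcs

/-- Along any trajectory of the replicator dynamics staying in the feasible domain with
positive row sums, the total system cost is nonincreasing. -/
theorem cost_nonincreasing_along_replicator (Q : ℕ) (hQ : 1 ≤ Q)
    (C : Fin Q → ℝ) (hC : ∀ i, 0 < C i)
    (p : Fin Q → Fin Q → ℝ) (hp : ∀ j i, 0 ≤ p j i)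
    (T : ℝ) (X : ℝ → Fin Q → Fin Q → ℝ)
    (hfeas : ∀ t ∈ Set.Ico (0:ℝ) T, X t ∈ feasible C)
    (hrow : ∀ t ∈ Set.Ico (0:ℝ) T, ∀ j, 0 < ∑ i, X t j i)
    (hdyn : ∀ t ∈ Set.Ico (0:ℝ) T, ∀ j i,
      HasDerivAt (fun s => X s j i)
        (X t j i * ((1 / ∑ r, X t j r) * (∑ r, X t j r * payoff C p (X t) j r)
            - payoff C p (X t) j i)) t) :
    AntitoneOn (fun t => cost C p (X t)) (Set.Ico (0:ℝ) T) := by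
  have hder := fun t ht =>
    hasDerivAt_cost (p := p) (fun i => ((hfeas t ht).2 i).ne) (hdyn t ht)
  refine antitoneOn_of_hasDerivWithinAt_nonpos (convex_Ico 0 T)
    (fun t ht => (hder t ht).continuousAt.continuousWithinAt)
    (fun t ht => (hder t (interior_subset ht)).hasDerivWithinAt) fun t ht => ?_
  have ht' := interior_subset ht
  exact Finset.sum_nonpos fun j _ =>
    sum_mul_replicator_nonpos _ ((hfeas t ht').1 j) (hrow t ht' j)
end

section
/- Fix a load vector x = (x_1,…,x_Q) with x_j > 0 for all j, and suppose X* ∈ F(x) is a global minimizer of the total system cost 𝒞 over the feasible set F(x). Then X* is a Wardrop equilibrium: for every j ∈ {1,…,Q}, every r with x*_j^r > 0, and every i ∈ {1,…,Q}, F_j^r(X*) ≤ F_j^i(X*). Equivalently, for every j there exists λ_j ∈ ℝ such that F_j^i(X*) = λ_j whenever x*_j^i > 0 and F_j^i(X*) ≥ λ_j whenever x*_j^i = 0. -/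
open Finset Set

/-- The feasible set F(x) of states in Ω whose row sums match the load vector x. -/
def feasLoad {Q : ℕ} (C : Fin Q → ℝ) (x : Fin Q → ℝ) : Set (Fin Q → Fin Q → ℝ) :=
  {X | X ∈ feasible C ∧ ∀ j, (∑ i, X j i) = x j}

/-- The state obtained from `X` by moving the row of mTracker `j` by `t` along `d`. -/
def perturbRow {Q : ℕ} (X : Fin Q → Fin Q → ℝ) (j : Fin Q) (d : Fin Q → ℝ) (t : ℝ) :
    Fin Q → Fin Q → ℝ :=
  fun l k => X l k + if l = j then t * d k else 0

lemma sum_column_perturbRow {Q : ℕ} (X : Fin Q → Fin Q → ℝ) (j : Fin Q) (d : Fin Q → ℝ)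
    (t : ℝ) (k : Fin Q) : ∑ l, perturbRow X j d t l k = (∑ l, X l k) + t * d k := by
  simp [perturbRow, Finset.sum_add_distrib]

lemma sum_row_perturbRow {Q : ℕ} (X : Fin Q → Fin Q → ℝ) (j : Fin Q) {d : Fin Q → ℝ}
    (hd : ∑ k, d k = 0) (t : ℝ) (l : Fin Q) :
    ∑ k, perturbRow X j d t l k = ∑ k, X l k := by
  by_cases h : l = j <;> simp [perturbRow, Finset.sum_add_distrib, h, ← Finset.mul_sum, hd]

lemma sum_price_perturbRow {Q : ℕ} (p X : Fin Q → Fin Q → ℝ) (j : Fin Q) (d : Fin Q → ℝ)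
    (t : ℝ) (k : Fin Q) :
    ∑ l, p l k * perturbRow X j d t l k = (∑ l, p l k * X l k) + p j k * (t * d k) := by
  simp [perturbRow, Finset.sum_add_distrib, mul_add]

/-- The payoffs of mTracker `j` are the partial derivatives of the cost along row `j`. -/
lemma hasDerivAt_cost_perturbRow {Q : ℕ} {C : Fin Q → ℝ} (p : Fin Q → Fin Q → ℝ)
    {X : Fin Q → Fin Q → ℝ} (hX : X ∈ feasible C) (j : Fin Q) (d : Fin Q → ℝ) :
    HasDerivAt (fun t => cost C p (perturbRow X j d t)) (∑ k, d k * payoff C p X j k) 0 := by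
  simp only [cost, sum_column_perturbRow, sum_price_perturbRow]
  refine HasDerivAt.fun_sum fun k _ => ?_
  have hne : C k - ∑ l, X l k ≠ 0 := (sub_pos.2 (hX.2 k)).ne'
  have hmove : HasDerivAt (fun t : ℝ => t * d k) (d k) 0 := by
    simpa using (hasDerivAt_id (0 : ℝ)).mul_const (d k)
  have hload := hmove.const_add (∑ l, X l k)
  have hquot := hload.fun_div (hload.const_sub (C k)) (by simpa using hne)
  refine (hquot.fun_add ((hmove.const_mul (p j k)).const_add _)).congr_deriv ?_
  simp only [payoff, zero_mul, add_zero]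
  field_simp
  ring

/-- Moving row `j` slightly in a direction that decreases only positive entries and preserves
the row sum keeps the state in the feasible set. -/
lemma eventually_perturbRow_mem_feasLoad {Q : ℕ} {C x : Fin Q → ℝ} {X : Fin Q → Fin Q → ℝ}
    (hX : X ∈ feasLoad C x) (j : Fin Q) {d : Fin Q → ℝ} (hd : ∑ k, d k = 0)
    (hpos : ∀ k, d k < 0 → 0 < X j k) :
    ∀ᶠ t in nhdsWithin (0 : ℝ) (Set.Ioi 0), perturbRow X j d t ∈ feasLoad C x := by
  have hmove (a b : ℝ) : Filter.Tendsto (fun t : ℝ => a + t * b)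
      (nhdsWithin 0 (Set.Ioi 0)) (nhds a) := by
    have : Continuous fun t : ℝ => a + t * b := by fun_prop
    simpa using (this.tendsto 0).mono_left nhdsWithin_le_nhds
  have hcol : ∀ᶠ t in nhdsWithin (0 : ℝ) (Set.Ioi 0), ∀ k, (∑ l, X l k) + t * d k < C k :=
    Filter.eventually_all.2 fun k => (hmove _ _).eventually_lt_const (hX.1.2 k)
  have hrow : ∀ᶠ t in nhdsWithin (0 : ℝ) (Set.Ioi 0), ∀ k, 0 ≤ X j k + t * d k := by
    refine Filter.eventually_all.2 fun k => ?_
    rcases lt_or_ge (d k) 0 with hk | hk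
    · exact ((hmove _ _).eventually_const_lt (hpos k hk)).mono fun _ => le_of_lt
    · filter_upwards [self_mem_nhdsWithin] with t ht
      exact add_nonneg (hX.1.1 j k) (mul_nonneg (le_of_lt ht) hk)
  filter_upwards [hcol, hrow] with t hcol hrow
  refine ⟨⟨fun l k => ?_, fun k => ?_⟩, fun l => ?_⟩
  · by_cases h : l = j
    · subst h
      simpa [perturbRow] using hrow k
    · simpa [perturbRow, h] using hX.1.1 l k
  · simpa only [sum_column_perturbRow] using hcol k
  · rw [sum_row_perturbRow X j hd, hX.2]

/-- First-order optimality condition for minimizers of the cost over the feasible set. -/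
lemma sum_mul_payoff_nonneg_of_minimizer {Q : ℕ} {C x : Fin Q → ℝ} {p X : Fin Q → Fin Q → ℝ}
    (hX : X ∈ feasLoad C x) (hmin : ∀ Y ∈ feasLoad C x, cost C p X ≤ cost C p Y)
    (j : Fin Q) {d : Fin Q → ℝ} (hd : ∑ k, d k = 0) (hpos : ∀ k, d k < 0 → 0 < X j k) :
    0 ≤ ∑ k, d k * payoff C p X j k := by
  refine ge_of_tendsto (hasDerivAt_cost_perturbRow p hX.1 j d).tendsto_slope_zero_right ?_
  filter_upwards [eventually_perturbRow_mem_feasLoad hX j hd hpos, self_mem_nhdsWithin]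
    with t hmem ht
  have hzero : perturbRow X j d 0 = X := by
    ext l k
    simp [perturbRow]
  rw [zero_add, hzero]
  exact smul_nonneg (inv_nonneg.2 (le_of_lt ht)) (sub_nonneg.2 (hmin _ hmem))

/-- A global minimizer of the total system cost over the feasible set F(x) is a
Wardrop equilibrium. -/
theorem minimizer_is_wardrop (Q : ℕ) (hQ : 1 ≤ Q)
    (C : Fin Q → ℝ) (hC : ∀ i, 0 < C i)
    (p : Fin Q → Fin Q → ℝ) (hp : ∀ j i, 0 ≤ p j i)
    (x : Fin Q → ℝ) (hx : ∀ j, 0 < x j)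
    (Xs : Fin Q → Fin Q → ℝ) (hXs : Xs ∈ feasLoad C x)
    (hmin : ∀ Y ∈ feasLoad C x, cost C p Xs ≤ cost C p Y) :
    (∀ j r i, 0 < Xs j r → payoff C p Xs j r ≤ payoff C p Xs j i) ∧
    (∀ j, ∃ lam : ℝ, (∀ i, 0 < Xs j i → payoff C p Xs j i = lam) ∧
      (∀ i, Xs j i = 0 → lam ≤ payoff C p Xs j i)) := by
  have hle : ∀ j r i, 0 < Xs j r → payoff C p Xs j r ≤ payoff C p Xs j i := by
    intro j r i hr
    have hnonneg := sum_mul_payoff_nonneg_of_minimizer hXs hmin j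
      (d := fun k => (if k = i then 1 else 0) - if k = r then 1 else 0) (by simp) (by
        intro k hk
        by_cases h : k = r
        · exact h ▸ hr
        · simp only [h, if_false, sub_zero] at hk
          split_ifs at hk <;> linarith)
    simpa [sub_mul, Finset.sum_sub_distrib] using hnonneg
  refine ⟨hle, fun j => ?_⟩
  obtain ⟨r, -, hr⟩ : ∃ r ∈ Finset.univ, 0 < Xs j r :=
    Finset.exists_lt_of_sum_lt (by simpa [hXs.2 j] using hx j)
  exact ⟨payoff C p Xs j r, fun i hi => le_antisymm (hle j i r hi) (hle j r i hr),
    fun i _ => hle j r i hr⟩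
end

section
/- Fix a load vector x = (x_1,…,x_Q) with x_j > 0 for all j, and suppose X̂ ∈ F(x) is a Wardrop equilibrium, i.e., for every j ∈ {1,…,Q}, every r with x̂_j^r > 0, and every i ∈ {1,…,Q}, F_j^r(X̂) ≤ F_j^i(X̂). Then X̂ is a global minimizer of the total system cost 𝒞 over the feasible set F(x); that is, 𝒞(X̂) ≤ 𝒞(X) for all X ∈ F(x). -/
open Finset Set

/-- The tangent-line inequality for the convex function `s ↦ s / (c - s)` on `s < c`. -/
lemma tangent_le_div_sub {c s t : ℝ} (hc : 0 < c) (hs : s < c) (ht : t < c) :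
    s / (c - s) + (1 / (c - s) + s / (c - s) ^ 2) * (t - s) ≤ t / (c - t) := by
  have hs' : 0 < c - s := sub_pos.2 hs
  have ht' : 0 < c - t := sub_pos.2 ht
  have key : t / (c - t) - (s / (c - s) + (1 / (c - s) + s / (c - s) ^ 2) * (t - s)) =
      c * (t - s) ^ 2 / ((c - t) * (c - s) ^ 2) := by
    field_simp
    ring
  have hnonneg : 0 ≤ c * (t - s) ^ 2 / ((c - t) * (c - s) ^ 2) := by positivity
  linarith

/-- A nonnegative allocation supported on the minimizers of `f` minimizes the total weight
`∑ i, f i * v i` among nonnegative allocations of the same total. -/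
lemma sum_mul_le_sum_mul_of_support_minimal {ι : Type*} [Fintype ι] {f u v : ι → ℝ}
    (hu : ∀ i, 0 ≤ u i) (hv : ∀ i, 0 ≤ v i) (huv : ∑ i, u i = ∑ i, v i)
    (hpos : 0 < ∑ i, u i) (hmin : ∀ r i, 0 < u r → f r ≤ f i) :
    ∑ i, f i * u i ≤ ∑ i, f i * v i := by
  obtain ⟨r, -, hr⟩ := Finset.exists_lt_of_sum_lt (s := Finset.univ) (f := fun _ : ι => (0 : ℝ))
    (g := u) (by simpa using hpos)
  calc ∑ i, f i * u i ≤ ∑ i, f r * u i := by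
        refine Finset.sum_le_sum fun i _ => ?_
        rcases (hu i).eq_or_lt with h | h
        · simp [← h]
        · exact mul_le_mul_of_nonneg_right (hmin i r h) h.le
    _ = ∑ i, f r * v i := by rw [← Finset.mul_sum, ← Finset.mul_sum, huv]
    _ ≤ ∑ i, f i * v i :=
        Finset.sum_le_sum fun i _ => mul_le_mul_of_nonneg_right (hmin r i hr) (hv i)

/-- The payoffs are the partial derivatives of the convex cost: the cost lies above its
linearization. -/
lemma cost_add_sum_payoff_le {Q : ℕ} {C : Fin Q → ℝ} (hC : ∀ i, 0 < C i)
    (p : Fin Q → Fin Q → ℝ) {Y X : Fin Q → Fin Q → ℝ}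
    (hY : Y ∈ feasible C) (hX : X ∈ feasible C) :
    cost C p Y + ∑ j, ∑ i, payoff C p Y j i * (X j i - Y j i) ≤ cost C p X := by
  rw [Finset.sum_comm, cost, cost, ← Finset.sum_add_distrib]
  refine Finset.sum_le_sum fun i _ => ?_
  have htangent := tangent_le_div_sub (hC i) (hY.2 i) (hX.2 i)
  have hsplit : ∑ j, payoff C p Y j i * (X j i - Y j i) =
      (1 / (C i - ∑ l, Y l i) + (∑ l, Y l i) / (C i - ∑ l, Y l i) ^ 2) *
        (∑ l, X l i - ∑ l, Y l i) + (∑ r, p r i * X r i - ∑ r, p r i * Y r i) := by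
    rw [← Finset.sum_sub_distrib, ← Finset.sum_sub_distrib, Finset.mul_sum,
      ← Finset.sum_add_distrib]
    refine Finset.sum_congr rfl fun j _ => ?_
    rw [payoff]
    ring
  linarith

/-- A Wardrop equilibrium is a global minimizer of the total system cost over the
feasible set F(x). -/
theorem wardrop_is_minimizer (Q : ℕ) (hQ : 1 ≤ Q)
    (C : Fin Q → ℝ) (hC : ∀ i, 0 < C i)
    (p : Fin Q → Fin Q → ℝ) (hp : ∀ j i, 0 ≤ p j i)
    (x : Fin Q → ℝ) (hx : ∀ j, 0 < x j)
    (Xh : Fin Q → Fin Q → ℝ) (hXh : Xh ∈ feasLoad C x)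
    (hwardrop : ∀ j r i, 0 < Xh j r → payoff C p Xh j r ≤ payoff C p Xh j i) :
    ∀ X ∈ feasLoad C x, cost C p Xh ≤ cost C p X := by
  intro X hX
  refine le_trans (le_add_of_nonneg_right (Finset.sum_nonneg fun j _ => ?_))
    (cost_add_sum_payoff_le hC p hXh.1 hX.1)
  simp only [mul_sub, Finset.sum_sub_distrib, sub_nonneg]
  exact sum_mul_le_sum_mul_of_support_minimal (hXh.1.1 j) (hX.1.1 j)
    ((hXh.2 j).trans (hX.2 j).symm) ((hx j).trans_eq (hXh.2 j).symm) (hwardrop j)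
end

section
/- For every real κ, the set {x ∈ ℝ^Q : x_j > 0 for all j, F(x) ≠ ∅, and 𝒞*(x) ≤ κ} of load vectors whose minimum achievable system cost is at most κ is a convex subset of ℝ^Q. -/
open Finset Set

/-- The minimum achievable system cost for a load vector x. -/
noncomputable def minCost {Q : ℕ} (C : Fin Q → ℝ) (p : Fin Q → Fin Q → ℝ)
    (x : Fin Q → ℝ) : ℝ :=
  sInf (cost C p '' feasLoad C x)

theorem convex_feasible {Q : ℕ} (C : Fin Q → ℝ) : Convex ℝ (feasible C) := by
  intro X hX Y hY a b ha hb hab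
  refine ⟨fun j i => ?_, fun i => ?_⟩
  · have h₁ := mul_nonneg ha (hX.1 j i)
    have h₂ := mul_nonneg hb (hY.1 j i)
    simpa using add_nonneg h₁ h₂
  · have h := (convex_Iio (𝕜 := ℝ) (C i)) (hX.2 i) (hY.2 i) ha hb hab
    simpa [Finset.sum_add_distrib, Finset.mul_sum] using h

/-- The queueing delay `s / (c - s)` is convex below the capacity `c`. -/
theorem convexOn_div_sub {c : ℝ} (hc : 0 ≤ c) :
    ConvexOn ℝ (Set.Iio c) fun s => s / (c - s) := by
  refine ⟨convex_Iio c, fun s hs t ht a b ha hb hab => ?_⟩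
  have h := (convexOn_zpow (𝕜 := ℝ) (-1)).2 (Set.mem_Ioi.2 (sub_pos.2 hs))
    (Set.mem_Ioi.2 (sub_pos.2 ht)) ha hb hab
  have hu := (convex_Iio (𝕜 := ℝ) c) hs ht ha hb hab
  have key : ∀ u < c, u / (c - u) = c * (c - u)⁻¹ - 1 := fun u hu => by
    have : c - u ≠ 0 := (sub_pos.2 hu).ne'
    field_simp
    ring
  have e : a * (c - s) + b * (c - t) = c - (a * s + b * t) := by
    linear_combination c * hab
  simp only [smul_eq_mul, zpow_neg_one, e] at h hu ⊢
  rw [key _ hs, key _ ht, key _ hu]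
  linarith [mul_le_mul_of_nonneg_left h hc]

theorem convexOn_cost {Q : ℕ} {C : Fin Q → ℝ} (hC : ∀ i, 0 < C i) (p : Fin Q → Fin Q → ℝ) :
    ConvexOn ℝ (feasible C) (cost C p) := by
  refine ⟨convex_feasible C, fun X hX Y hY a b ha hb hab => ?_⟩
  simp only [cost, smul_eq_mul, Finset.mul_sum, ← Finset.sum_add_distrib]
  refine Finset.sum_le_sum fun i _ => ?_
  have h := (convexOn_div_sub (hC i).le).2 (hX.2 i) (hY.2 i) ha hb hab
  have hsum : ∑ r, (a • X + b • Y) r i = a * ∑ r, X r i + b * ∑ r, Y r i := by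
    simp [Finset.sum_add_distrib, Finset.mul_sum]
  have hprice : ∑ r, p r i * (a • X + b • Y) r i
      = a * ∑ r, p r i * X r i + b * ∑ r, p r i * Y r i := by
    simp only [Finset.mul_sum, ← Finset.sum_add_distrib]
    refine Finset.sum_congr rfl fun r _ => ?_
    simp only [Pi.add_apply, Pi.smul_apply, smul_eq_mul]
    ring
  simp only [smul_eq_mul] at h
  rw [hsum, hprice]
  linarith

theorem cost_nonneg {Q : ℕ} {C : Fin Q → ℝ} {p : Fin Q → Fin Q → ℝ}
    (hp : ∀ j i, 0 ≤ p j i) {X : Fin Q → Fin Q → ℝ} (hX : X ∈ feasible C) :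
    0 ≤ cost C p X :=
  Finset.sum_nonneg fun i _ => add_nonneg
    (div_nonneg (Finset.sum_nonneg fun r _ => hX.1 r i) (sub_pos.2 (hX.2 i)).le)
    (Finset.sum_nonneg fun r _ => mul_nonneg (hp r i) (hX.1 r i))

theorem minCost_le_cost {Q : ℕ} {C : Fin Q → ℝ} {p : Fin Q → Fin Q → ℝ}
    (hp : ∀ j i, 0 ≤ p j i) {x : Fin Q → ℝ} {X : Fin Q → Fin Q → ℝ} (hX : X ∈ feasLoad C x) :
    minCost C p x ≤ cost C p X := by
  refine csInf_le ⟨0, ?_⟩ (Set.mem_image_of_mem _ hX)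
  rintro _ ⟨Y, hY, rfl⟩
  exact cost_nonneg hp hY.1

theorem exists_cost_lt_of_minCost_lt {Q : ℕ} {C : Fin Q → ℝ} {p : Fin Q → Fin Q → ℝ}
    {x : Fin Q → ℝ} (hx : (feasLoad C x).Nonempty) {c : ℝ} (h : minCost C p x < c) :
    ∃ X ∈ feasLoad C x, cost C p X < c := by
  obtain ⟨_, ⟨X, hX, rfl⟩, hlt⟩ := exists_lt_of_csInf_lt (hx.image _) h
  exact ⟨X, hX, hlt⟩

theorem smul_add_smul_mem_feasLoad {Q : ℕ} {C : Fin Q → ℝ} {x y : Fin Q → ℝ}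
    {X Y : Fin Q → Fin Q → ℝ} (hX : X ∈ feasLoad C x) (hY : Y ∈ feasLoad C y)
    {a b : ℝ} (ha : 0 ≤ a) (hb : 0 ≤ b) (hab : a + b = 1) :
    a • X + b • Y ∈ feasLoad C (a • x + b • y) := by
  refine ⟨convex_feasible C hX.1 hY.1 ha hb hab, fun j => ?_⟩
  simp [Finset.sum_add_distrib, ← Finset.mul_sum, hX.2 j, hY.2 j]

/-- For every κ, the sublevel set of load vectors whose minimum achievable system cost
is at most κ is convex. -/
theorem minCost_sublevel_convex (Q : ℕ) (hQ : 1 ≤ Q)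
    (C : Fin Q → ℝ) (hC : ∀ i, 0 < C i)
    (p : Fin Q → Fin Q → ℝ) (hp : ∀ j i, 0 ≤ p j i) (κ : ℝ) :
    Convex ℝ {x : Fin Q → ℝ | (∀ j, 0 < x j) ∧ (feasLoad C x).Nonempty ∧
      minCost C p x ≤ κ} := by
  rintro x ⟨hx, hFx, hκx⟩ y ⟨hy, hFy, hκy⟩ a b ha hb hab
  refine ⟨fun j => (convex_Ioi (𝕜 := ℝ) (0 : ℝ)) (hx j) (hy j) ha hb hab, ?_, ?_⟩
  · obtain ⟨X, hX⟩ := hFx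
    obtain ⟨Y, hY⟩ := hFy
    exact ⟨_, smul_add_smul_mem_feasLoad hX hY ha hb hab⟩
  · refine le_of_forall_gt_imp_ge_of_dense fun c hc => ?_
    obtain ⟨X, hX, hXc⟩ := exists_cost_lt_of_minCost_lt hFx (hκx.trans_lt hc)
    obtain ⟨Y, hY, hYc⟩ := exists_cost_lt_of_minCost_lt hFy (hκy.trans_lt hc)
    calc minCost C p (a • x + b • y) ≤ cost C p (a • X + b • Y) :=
          minCost_le_cost hp (smul_add_smul_mem_feasLoad hX hY ha hb hab)
      _ ≤ c := ((convexOn_cost hC p).convex_le c ⟨hX.1, hXc.le⟩ ⟨hY.1, hYc.le⟩ ha hb hab).2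
end

section
/- Let D : ℝ_{>0}^Q → ℝ be differentiable, let w_1,…,w_Q > 0, and let V(x) = Σ_{j=1}^Q w_j log x_j − D(x). Let x : [0, T) → ℝ_{>0}^Q be a differentiable trajectory satisfying the admission control dynamics d/dt x_j(t) = w_j − x_j(t) ∂D/∂x_j(x(t)) for all j. Then d/dt V(x(t)) = Σ_{j=1}^Q (d/dt x_j(t))² / x_j(t) ≥ 0; in particular, t ↦ V(x(t)) is nondecreasing on [0, T). -/
open Finset

/-- Along any trajectory of the admission control dynamics ẋ_j = w_j − x_j ∂D/∂x_j(x),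
the net utility V(x) = Σ_j w_j log x_j − D(x) has derivative Σ_j ẋ_j²/x_j ≥ 0 along the
trajectory; in particular it is nondecreasing. -/
theorem netUtility_nondecreasing_along_admission_control (Q : ℕ) (hQ : 1 ≤ Q)
    (D : (Fin Q → ℝ) → ℝ)
    (hD : ∀ x : Fin Q → ℝ, (∀ j, 0 < x j) → DifferentiableAt ℝ D x)
    (w : Fin Q → ℝ) (hw : ∀ j, 0 < w j)
    (T : ℝ) (x : ℝ → Fin Q → ℝ)
    (hpos : ∀ t ∈ Set.Ico (0:ℝ) T, ∀ j, 0 < x t j)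
    (hdyn : ∀ t ∈ Set.Ico (0:ℝ) T, ∀ j,
      HasDerivAt (fun s => x s j)
        (w j - x t j * (fderiv ℝ D (x t) (Pi.single j 1))) t) :
    (∀ t ∈ Set.Ico (0:ℝ) T,
      HasDerivAt (fun s => (∑ j, w j * Real.log (x s j)) - D (x s))
        (∑ j, (w j - x t j * (fderiv ℝ D (x t) (Pi.single j 1))) ^ 2 / x t j) t ∧
      0 ≤ ∑ j, (w j - x t j * (fderiv ℝ D (x t) (Pi.single j 1))) ^ 2 / x t j) ∧
    MonotoneOn (fun t => (∑ j, w j * Real.log (x t j)) - D (x t)) (Set.Ico (0:ℝ) T) := by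
  have key : ∀ t ∈ Set.Ico (0:ℝ) T,
      HasDerivAt (fun s => (∑ j, w j * Real.log (x s j)) - D (x s))
        (∑ j, (w j - x t j * (fderiv ℝ D (x t) (Pi.single j 1))) ^ 2 / x t j) t ∧
      0 ≤ ∑ j, (w j - x t j * (fderiv ℝ D (x t) (Pi.single j 1))) ^ 2 / x t j := by
    intro t ht
    refine ⟨?_, Finset.sum_nonneg fun j _ => div_nonneg (sq_nonneg _) (hpos t ht j).le⟩
    have hlog := HasDerivAt.fun_sum (u := Finset.univ) fun j _ =>
      ((hdyn t ht j).log (hpos t ht j).ne').const_mul (w j)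
    have hcomp := (hD (x t) (hpos t ht)).hasFDerivAt.comp_hasDerivAt t
      (hasDerivAt_pi.2 (hdyn t ht))
    refine (hlog.sub hcomp).congr_deriv ?_
    rw [← ContinuousLinearMap.coe_coe, LinearMap.pi_apply_eq_sum_univ,
      ← Finset.sum_sub_distrib]
    refine Finset.sum_congr rfl fun j _ => ?_
    have hne := (hpos t ht j).ne'
    have hsingle : (fun i => if j = i then (1 : ℝ) else 0) = Pi.single j 1 := by
      ext i
      simp [Pi.single_apply, eq_comm]
    rw [hsingle, smul_eq_mul]
    field_simp
  refine ⟨key, monotoneOn_of_hasDerivWithinAt_nonneg (convex_Ico 0 T)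
    (fun t ht => (key t ht).1.continuousAt.continuousWithinAt)
    (fun t ht => (key t (interior_subset ht)).1.hasDerivWithinAt)
    (fun t ht => (key t (interior_subset ht)).2)⟩
end
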